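/- arXiv:2210.14780 — 3 statements merged into one kernel-verified Lean document; each statement's English description precedes it below -/
import Mathlib

section
/- Assume ω = ‖x̃‖² > 0. Relabel the elements of c^{∖k} as c'_1 > c'_2 > … > c'_{m−1} and adopt the conventions c'_0 = +∞ and c'_m = 0. Define T(γ) as follows: T(γ) = 0 if |γ| ≤ S(ε_c); T(γ) = sign(γ)·c'_i if ω c'_i + S(c'_i − ε_c) ≤ |γ| ≤ ω c'_i + S(c'_i + ε_c) for some i ∈ {1,…,m−1}; T(γ) = (sign(γ)/ω)(|γ| − S(c'_i + ε_c)) if ω c'_i + S(c'_i + ε_c) < |γ| < ω c'_{i−1} + S(c'_{i−1} − ε_c) for some i ∈ {1,…,m}; and T(γ) = (sign(γ)/ω)(|γ| − S(c'_1 + ε_c)) if m ≥ 2 and |γ| ≥ ω c'_1 + S(c'_1 + ε_c). Then T(γ) is the unique minimizer over ℝ of the function G. -/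
open Finset Filter

noncomputable section

/-- The sign of a real number, with the convention `sgn 0 = 1`. -/
def sgn (t : ℝ) : ℝ := if t < 0 then -1 else 1

/-- A permutation sorting the absolute values of `β` in nonincreasing order. -/
def sortPerm {p : ℕ} (β : Fin p → ℝ) : Equiv.Perm (Fin p) :=
  (Fin.revPerm).trans (Tuple.sort fun j => |β j|)

/-- The sorted ℓ₁ norm `J(β) = Σ_j λ_j |β|_(j)`. -/
def sortedL1 {p : ℕ} (lam β : Fin p → ℝ) : ℝ :=
  ∑ j, lam j * |β (sortPerm β j)|

/-- `β(z)`: the vector obtained from `β` by replacing entries of the cluster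
`{i : |β i| = ck}` by `sign(β i) * z`. -/
def cupd {p : ℕ} (β : Fin p → ℝ) (ck z : ℝ) : Fin p → ℝ :=
  fun i => if |β i| = ck then sgn (β i) * z else β i

/-- The partial sorted ℓ₁ norm `H(z) = J(β(z))`. -/
def Hfun {p : ℕ} (lam β : Fin p → ℝ) (ck : ℝ) (z : ℝ) : ℝ :=
  sortedL1 lam (cupd β ck z)

/-- `S(w) = Σ_{j ∈ C(w)} λ_{(j)⁻_w}`, where `C(w) = {j : |β(w)_j| = |w|}`. -/
def Sval {p : ℕ} (lam β : Fin p → ℝ) (ck : ℝ) (w : ℝ) : ℝ :=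
  ∑ j, if |cupd β ck w j| = |w| then lam ((sortPerm (cupd β ck w))⁻¹ j) else 0

/-- squared Euclidean norm -/
def sqnorm {n : ℕ} (v : Fin n → ℝ) : ℝ := ∑ i, (v i) ^ 2

/-- `G(z) = (1/2)‖y − Xβ(z)‖² + H(z)`. -/
def Gfun {n p : ℕ} (lam : Fin p → ℝ) (X : Matrix (Fin n) (Fin p) ℝ) (y : Fin n → ℝ)
    (β : Fin p → ℝ) (ck : ℝ) (z : ℝ) : ℝ :=
  (1/2) * sqnorm (fun i => y i - ∑ j, X i j * cupd β ck z j) + Hfun lam β ck z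

/-- `x̃ = Σ_{j ∈ C_k} sign(β_j) X_{:j}`. -/
def xtil {n p : ℕ} (X : Matrix (Fin n) (Fin p) ℝ) (β : Fin p → ℝ) (ck : ℝ) : Fin n → ℝ :=
  fun i => ∑ j, if |β j| = ck then sgn (β j) * X i j else 0

/-- `γ = c_k ω + x̃ᵀ r` where `r = y − Xβ` and `ω = ‖x̃‖²`. -/
def gam {n p : ℕ} (X : Matrix (Fin n) (Fin p) ℝ) (y : Fin n → ℝ) (β : Fin p → ℝ) (ck : ℝ) : ℝ :=
  ck * sqnorm (xtil X β ck) + ∑ i, xtil X β ck i * (y i - ∑ j, X i j * β j)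

end

theorem abs_sgn_mul (x z : ℝ) : |sgn x * z| = |z| := by
  unfold sgn
  split_ifs <;> simp

theorem sgn_mul_abs (x : ℝ) : sgn x * |x| = x := by
  unfold sgn
  split_ifs with h
  · rw [abs_of_neg h]; ring
  · rw [abs_of_nonneg (not_lt.mp h)]; ring

theorem sgn_mul_self (x : ℝ) : sgn x * sgn x = 1 := by
  unfold sgn
  split_ifs <;> norm_num

theorem abs_cupd {p : ℕ} (β : Fin p → ℝ) (ck z : ℝ) (j : Fin p) :
    |cupd β ck z j| = if |β j| = ck then |z| else |β j| := by
  unfold cupd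
  split_ifs
  · exact abs_sgn_mul _ _
  · rfl

theorem antitone_abs_comp_sortPerm {p : ℕ} (b : Fin p → ℝ) :
    Antitone fun j => |b (sortPerm b j)| := by
  intro i j hij
  exact Tuple.monotone_sort (fun j => |b j|) (Fin.rev_le_rev.mpr hij)

/-- Among all rearrangements, a nonincreasing one maximizes the pairing with `lam`. -/
theorem sum_mul_abs_perm_le {p : ℕ} {lam : Fin p → ℝ} (hlam : Antitone lam) (b : Fin p → ℝ)
    (σ ρ : Equiv.Perm (Fin p)) (hρ : Antitone fun j => |b (ρ j)|) :
    ∑ j, lam j * |b (σ j)| ≤ ∑ j, lam j * |b (ρ j)| := by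
  simpa using (hlam.monovary hρ).sum_mul_comp_perm_le_sum_mul (σ := ρ⁻¹ * σ)

theorem sum_le_sortedL1 {p : ℕ} {lam : Fin p → ℝ} (hlam : Antitone lam) (b : Fin p → ℝ)
    (σ : Equiv.Perm (Fin p)) : ∑ j, lam j * |b (σ j)| ≤ sortedL1 lam b :=
  sum_mul_abs_perm_le hlam b σ (sortPerm b) (antitone_abs_comp_sortPerm b)

theorem sortedL1_eq_sum {p : ℕ} {lam : Fin p → ℝ} (hlam : Antitone lam) (b : Fin p → ℝ)
    (σ : Equiv.Perm (Fin p)) (hσ : Antitone fun j => |b (σ j)|) :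
    sortedL1 lam b = ∑ j, lam j * |b (σ j)| :=
  le_antisymm (sum_mul_abs_perm_le hlam b _ σ hσ) (sum_le_sortedL1 hlam b σ)

theorem abs_cupd_congr {p : ℕ} (β : Fin p → ℝ) (ck : ℝ) {z w : ℝ} (h : |z| = |w|) (j : Fin p) :
    |cupd β ck z j| = |cupd β ck w j| := by
  rw [abs_cupd, abs_cupd, h]

theorem sortPerm_cupd_congr {p : ℕ} (β : Fin p → ℝ) (ck : ℝ) {z w : ℝ} (h : |z| = |w|) :
    sortPerm (cupd β ck z) = sortPerm (cupd β ck w) := by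
  unfold sortPerm
  rw [funext (abs_cupd_congr β ck h)]

theorem Hfun_congr_abs {p : ℕ} (lam β : Fin p → ℝ) (ck : ℝ) {z w : ℝ} (h : |z| = |w|) :
    Hfun lam β ck z = Hfun lam β ck w := by
  simp only [Hfun, sortedL1, sortPerm_cupd_congr β ck h, abs_cupd_congr β ck h]

theorem Sval_congr_abs {p : ℕ} (lam β : Fin p → ℝ) (ck : ℝ) {z w : ℝ} (h : |z| = |w|) :
    Sval lam β ck z = Sval lam β ck w := by
  simp only [Sval, sortPerm_cupd_congr β ck h, abs_cupd_congr β ck h, h]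

theorem Sval_nonneg {p : ℕ} {lam : Fin p → ℝ} (hlam : ∀ j, 0 ≤ lam j) (β : Fin p → ℝ)
    (ck w : ℝ) : 0 ≤ Sval lam β ck w := by
  refine Finset.sum_nonneg fun j _ => ?_
  split_ifs
  · exact hlam _
  · exact le_rfl

/-- If no entry outside the cluster separates `w` from `τ`, then `S(w)` is a slope of an affine
minorant, in the variable `|z|`, of `H` that is exact at `τ`. -/
theorem Hfun_add_Sval_mul_le {p : ℕ} {lam : Fin p → ℝ} (hlam : Antitone lam)
    (β : Fin p → ℝ) (ck : ℝ) {w τ : ℝ} (hw : 0 ≤ w) (hτ : 0 ≤ τ)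
    (hsep : ∀ j, |β j| ≠ ck → (|β j| < w ∧ |β j| ≤ τ) ∨ (w < |β j| ∧ τ ≤ |β j|)) (z : ℝ) :
    Hfun lam β ck τ + Sval lam β ck w * (|z| - τ) ≤ Hfun lam β ck z := by
  set σ := sortPerm (cupd β ck w) with hσ
  have hanti : Antitone fun j => |cupd β ck τ (σ j)| := by
    intro i j hij
    have h := antitone_abs_comp_sortPerm (cupd β ck w) hij
    simp only [← hσ, abs_cupd, abs_of_nonneg hw, abs_of_nonneg hτ] at h ⊢
    have hi := hsep (σ i)
    have hj := hsep (σ j)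
    by_cases h1 : |β (σ i)| = ck <;> by_cases h2 : |β (σ j)| = ck <;>
      simp only [h1, h2, if_true, if_false] at h ⊢
    · exact le_rfl
    · rcases hj h2 with h3 | h3 <;> linarith
    · rcases hi h1 with h3 | h3 <;> linarith
    · exact h
  have hS : Sval lam β ck w = ∑ j, if |β (σ j)| = ck then lam j else 0 := by
    unfold Sval
    rw [← Equiv.sum_comp σ]
    refine Finset.sum_congr rfl fun j _ => ?_
    rw [← hσ, Equiv.Perm.inv_def, Equiv.symm_apply_apply, abs_cupd]
    by_cases h1 : |β (σ j)| = ck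
    · simp [h1]
    · have hne : |β (σ j)| ≠ |w| := by
        rw [abs_of_nonneg hw]
        rcases hsep _ h1 with h3 | h3
        · exact h3.1.ne
        · exact h3.1.ne'
      simp [h1, hne]
  have hz := sum_le_sortedL1 hlam (cupd β ck z) σ
  have hτ' := sortedL1_eq_sum hlam (cupd β ck τ) σ hanti
  unfold Hfun
  refine le_trans (le_of_eq ?_) hz
  rw [hτ', hS, Finset.sum_mul, ← Finset.sum_add_distrib]
  refine Finset.sum_congr rfl fun j _ => ?_
  rw [abs_cupd, abs_cupd, abs_of_nonneg hτ]
  split_ifs <;> ring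

/-- `S` is constant on intervals free of entries outside the cluster. -/
theorem Sval_eq_of_same_side {p : ℕ} {lam : Fin p → ℝ} (hlam : Antitone lam)
    (β : Fin p → ℝ) (ck : ℝ) {w v : ℝ} (hw : 0 ≤ w) (hv : 0 ≤ v)
    (hsep : ∀ j, |β j| ≠ ck → (|β j| < w ∧ |β j| < v) ∨ (w < |β j| ∧ v < |β j|)) :
    Sval lam β ck w = Sval lam β ck v := by
  rcases eq_or_ne w v with rfl | hne
  · rfl
  have hminor : ∀ {a τ : ℝ}, (a = w ∨ a = v) → (τ = w ∨ τ = v) → ∀ z,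
      Hfun lam β ck τ + Sval lam β ck a * (|z| - τ) ≤ Hfun lam β ck z := by
    rintro a τ ha hτ
    refine Hfun_add_Sval_mul_le hlam β ck (by grind) (by grind) fun j hj => ?_
    have := hsep j hj
    grind
  have h1 := hminor (.inl rfl) (.inl rfl) v
  have h2 := hminor (.inl rfl) (.inr rfl) w
  have h3 := hminor (.inr rfl) (.inl rfl) v
  have h4 := hminor (.inr rfl) (.inr rfl) w
  rw [abs_of_nonneg hv] at h1 h3
  rw [abs_of_nonneg hw] at h2 h4
  exact mul_right_cancel₀ (sub_ne_zero.mpr hne) (by linarith :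
    Sval lam β ck w * (w - v) = Sval lam β ck v * (w - v))

theorem sub_sum_mul_cupd {n p : ℕ} (X : Matrix (Fin n) (Fin p) ℝ) (y : Fin n → ℝ)
    (β : Fin p → ℝ) (ck z : ℝ) (i : Fin n) :
    y i - ∑ j, X i j * cupd β ck z j =
      (y i - ∑ j, X i j * β j) + (ck - z) * xtil X β ck i := by
  have h : ∑ j, X i j * cupd β ck z j = ∑ j, X i j * β j - (ck - z) * xtil X β ck i := by
    unfold xtil
    rw [Finset.mul_sum, ← Finset.sum_sub_distrib]
    refine Finset.sum_congr rfl fun j _ => ?_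
    unfold cupd
    split_ifs with hj
    · have hβ := sgn_mul_abs (β j)
      rw [hj] at hβ
      linear_combination X i j * hβ
    · ring
  rw [h]
  ring

theorem Gfun_sub_Gfun {n p : ℕ} (lam : Fin p → ℝ) (X : Matrix (Fin n) (Fin p) ℝ)
    (y : Fin n → ℝ) (β : Fin p → ℝ) (ck z t : ℝ) :
    Gfun lam X y β ck z - Gfun lam X y β ck t =
      1 / 2 * sqnorm (xtil X β ck) * (z - t) ^ 2 +
        (sqnorm (xtil X β ck) * t - gam X y β ck) * (z - t) +
        (Hfun lam β ck z - Hfun lam β ck t) := by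
  have hsq : ∀ z, sqnorm (fun i => y i - ∑ j, X i j * cupd β ck z j) =
      sqnorm (fun i => y i - ∑ j, X i j * β j) +
        2 * (ck - z) * (∑ i, xtil X β ck i * (y i - ∑ j, X i j * β j)) +
        (ck - z) ^ 2 * sqnorm (xtil X β ck) := by
    intro z
    unfold sqnorm
    rw [Finset.mul_sum, Finset.mul_sum, ← Finset.sum_add_distrib, ← Finset.sum_add_distrib]
    refine Finset.sum_congr rfl fun i _ => ?_
    simp only [sub_sum_mul_cupd]
    ring
  unfold Gfun gam
  rw [hsq z, hsq t]
  ring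

/-- First-order optimality: if `|γ| - ω τ` lies between two slopes of minorants of `H` exact at
`τ`, then `sgn γ * τ` is the unique minimizer of `G`. -/
theorem isUniqueMin_of_slopes {n p : ℕ} {lam : Fin p → ℝ} {X : Matrix (Fin n) (Fin p) ℝ}
    {y : Fin n → ℝ} {β : Fin p → ℝ} {ck t τ a b : ℝ} (hω : 0 < sqnorm (xtil X β ck))
    (ha : 0 ≤ a)
    (hHa : ∀ z, Hfun lam β ck τ + a * (|z| - τ) ≤ Hfun lam β ck z)
    (hHb : ∀ z, Hfun lam β ck τ + b * (|z| - τ) ≤ Hfun lam β ck z)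
    (hag : sqnorm (xtil X β ck) * τ + a ≤ |gam X y β ck|)
    (hgb : |gam X y β ck| ≤ sqnorm (xtil X β ck) * τ + b)
    (ht : t = sgn (gam X y β ck) * τ) :
    (∀ w : ℝ, Gfun lam X y β ck t ≤ Gfun lam X y β ck w) ∧
    (∀ z : ℝ, (∀ w : ℝ, Gfun lam X y β ck z ≤ Gfun lam X y β ck w) → z = t) := by
  have hquad : ∀ z, 1 / 2 * sqnorm (xtil X β ck) * (z - t) ^ 2 ≤
      Gfun lam X y β ck z - Gfun lam X y β ck t := by
    intro z
    rw [Gfun_sub_Gfun]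
    have hHt : Hfun lam β ck t = Hfun lam β ck τ :=
      Hfun_congr_abs lam β ck (by rw [ht, abs_sgn_mul])
    rw [hHt]
    have h1 := hHa z
    have h2 := hHb z
    set ω := sqnorm (xtil X β ck)
    set γ := gam X y β ck
    have hslope : (|γ| - ω * τ) * (|z| - τ) ≤ Hfun lam β ck z - Hfun lam β ck τ := by
      rcases le_total τ |z| with h | h
      · nlinarith
      · nlinarith
    have hz : sgn γ * z ≤ |z| := (le_abs_self _).trans_eq (abs_sgn_mul γ z)
    have hlin : (γ - ω * t) * (z - t) = (|γ| - ω * τ) * (sgn γ * z - τ) := by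
      rw [ht]
      linear_combination (-(z - sgn γ * τ)) * sgn_mul_abs γ - (|γ| - ω * τ) * τ * sgn_mul_self γ
    have hmono : (|γ| - ω * τ) * (sgn γ * z - τ) ≤ (|γ| - ω * τ) * (|z| - τ) :=
      mul_le_mul_of_nonneg_left (by linarith) (by linarith)
    linarith
  refine ⟨fun w => ?_, fun z hz => ?_⟩
  · have := hquad w
    have : 0 ≤ 1 / 2 * sqnorm (xtil X β ck) * (w - t) ^ 2 := by positivity
    linarith
  · have h1 := hquad z
    have h2 := hz t
    have h3 : (z - t) ^ 2 ≤ 0 := by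
      by_contra! h
      have : 0 < 1 / 2 * sqnorm (xtil X β ck) * (z - t) ^ 2 := by positivity
      linarith
    exact sub_eq_zero.mp (pow_eq_zero_iff two_ne_zero |>.mp (le_antisymm h3 (sq_nonneg _)))

/-- SLOPE thresholding operator: assume `ω = ‖x̃‖² > 0`. The elements of
`c^{∖k}` are relabelled as `cc 1 > cc 2 > … > cc (m−1)` with the conventions
`cc 0 = +∞` (encoded by removing the corresponding bound) and `cc m = 0`. Whenever `t`
equals the value `T(γ)` prescribed by one of the cases (case 3 for `i ∈ {1,…,m}` is split
into `i ∈ {2,…,m}` and `i = 1`, the latter having no upper bound since `cc 0 = +∞`),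
`t` is the unique minimizer of `G` over ℝ. -/
theorem slope_thresholding_operator
    {n p m : ℕ} (hn : 0 < n) (hp : 0 < p) (hm : 0 < m)
    (lam : Fin p → ℝ)
    (hlam_mono : ∀ i j : Fin p, i ≤ j → lam j ≤ lam i)
    (hlam_nonneg : ∀ j, 0 ≤ lam j)
    (β : Fin p → ℝ) (c : Fin m → ℝ)
    (hc_anti : StrictAnti c) (hc_nonneg : ∀ i, 0 ≤ c i)
    (h_attain : ∀ i, ∃ j, |β j| = c i)
    (h_cover : ∀ j, ∃ i, |β j| = c i)
    (k : Fin m)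
    (ε : ℝ) (hε_pos : 0 < ε)
    (hε_sep : ∀ i j, i ≠ j → ε < |c i - c j|)
    (hε_min : ∀ i, c i ≠ 0 → ε < c i)
    (X : Matrix (Fin n) (Fin p) ℝ) (y : Fin n → ℝ)
    (hω : 0 < sqnorm (xtil X β (c k)))
    (cc : ℕ → ℝ)
    (h_cc_anti : ∀ i j : ℕ, 1 ≤ i → i < j → j ≤ m - 1 → cc j < cc i)
    (h_cc_range : ∀ x : ℝ, (∃ i, i ≠ k ∧ x = c i) ↔ (∃ i : ℕ, 1 ≤ i ∧ i ≤ m - 1 ∧ x = cc i))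
    (h_cc_m : cc m = 0)
    (t : ℝ)
    (ht :
      -- case 1
      (|gam X y β (c k)| ≤ Sval lam β (c k) ε ∧ t = 0) ∨
      -- case 2: t = sign(γ) cc i for some i ∈ {1,…,m−1}
      (∃ i : ℕ, 1 ≤ i ∧ i ≤ m - 1 ∧
        sqnorm (xtil X β (c k)) * cc i + Sval lam β (c k) (cc i - ε) ≤ |gam X y β (c k)| ∧
        |gam X y β (c k)| ≤ sqnorm (xtil X β (c k)) * cc i + Sval lam β (c k) (cc i + ε) ∧
        t = sgn (gam X y β (c k)) * cc i) ∨
      -- case 3 for i ∈ {2,…,m}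
      (∃ i : ℕ, 2 ≤ i ∧ i ≤ m ∧
        sqnorm (xtil X β (c k)) * cc i + Sval lam β (c k) (cc i + ε) < |gam X y β (c k)| ∧
        |gam X y β (c k)| <
          sqnorm (xtil X β (c k)) * cc (i - 1) + Sval lam β (c k) (cc (i - 1) - ε) ∧
        t = sgn (gam X y β (c k)) / sqnorm (xtil X β (c k)) *
              (|gam X y β (c k)| - Sval lam β (c k) (cc i + ε))) ∨
      -- case 3 for i = 1 (upper bound removed since cc 0 = +∞)
      (sqnorm (xtil X β (c k)) * cc 1 + Sval lam β (c k) (cc 1 + ε) < |gam X y β (c k)| ∧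
        t = sgn (gam X y β (c k)) / sqnorm (xtil X β (c k)) *
              (|gam X y β (c k)| - Sval lam β (c k) (cc 1 + ε))) ∨
      -- case 4
      (2 ≤ m ∧
        sqnorm (xtil X β (c k)) * cc 1 + Sval lam β (c k) (cc 1 + ε) ≤ |gam X y β (c k)| ∧
        t = sgn (gam X y β (c k)) / sqnorm (xtil X β (c k)) *
              (|gam X y β (c k)| - Sval lam β (c k) (cc 1 + ε)))) :
    (∀ w : ℝ, Gfun lam X y β (c k) t ≤ Gfun lam X y β (c k) w) ∧
    (∀ z : ℝ, (∀ w : ℝ, Gfun lam X y β (c k) z ≤ Gfun lam X y β (c k) w) → z = t) := by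
  have hlam : Antitone lam := fun i j hij => hlam_mono i j hij
  have hcc : ∀ i, 1 ≤ i → i ≤ m - 1 → ∃ l, cc i = c l := fun i h1 h2 =>
    let ⟨l, _, hl⟩ := (h_cc_range (cc i)).mpr ⟨i, h1, h2, rfl⟩
    ⟨l, hl⟩
  have hcc_nonneg : ∀ i, 1 ≤ i → i ≤ m - 1 → 0 ≤ cc i := fun i h1 h2 => by
    obtain ⟨l, hl⟩ := hcc i h1 h2
    exact hl ▸ hc_nonneg l
  have hcc_min : ∀ i, 1 ≤ i → i ≤ m - 1 → 0 < cc i → ε < cc i := fun i h1 h2 h3 => by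
    obtain ⟨l, hl⟩ := hcc i h1 h2
    rw [hl] at h3 ⊢
    exact hε_min l h3.ne'
  have hgap : ∀ i j, 1 ≤ i → i < j → j ≤ m - 1 → cc j + ε < cc i := fun i j h1 h2 h3 => by
    have hlt := h_cc_anti i j h1 h2 h3
    obtain ⟨l, hl⟩ := hcc i h1 (by omega)
    obtain ⟨l', hl'⟩ := hcc j (by omega) h3
    have hne : l ≠ l' := by
      rintro rfl
      linarith
    have := hε_sep l l' hne
    rw [← hl, ← hl', abs_of_pos (by linarith)] at this
    linarith
  have hother : ∀ j, |β j| ≠ c k → ∃ i, 1 ≤ i ∧ i ≤ m - 1 ∧ |β j| = cc i := fun j hj => by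
    obtain ⟨l, hl⟩ := h_cover j
    exact (h_cc_range _).mp ⟨l, fun h => hj (h ▸ hl), hl⟩
  have hminor : ∀ w τ, 0 ≤ w → 0 ≤ τ →
      (∀ i, 1 ≤ i → i ≤ m - 1 → (cc i < w ∧ cc i ≤ τ) ∨ (w < cc i ∧ τ ≤ cc i)) →
      ∀ z, Hfun lam β (c k) τ + Sval lam β (c k) w * (|z| - τ) ≤ Hfun lam β (c k) z := by
    intro w τ hw hτ h
    refine Hfun_add_Sval_mul_le hlam β (c k) hw hτ fun j hj => ?_
    obtain ⟨i, h1, h2, h3⟩ := hother j hj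
    rw [h3]
    exact h i h1 h2
  have hS := Sval_nonneg hlam_nonneg β (c k)
  have hzero : |gam X y β (c k)| ≤ Sval lam β (c k) ε → t = 0 →
      (∀ w : ℝ, Gfun lam X y β (c k) t ≤ Gfun lam X y β (c k) w) ∧
      (∀ z : ℝ, (∀ w : ℝ, Gfun lam X y β (c k) z ≤ Gfun lam X y β (c k) w) → z = t) := by
    intro hγ ht0
    have hb := hminor ε 0 hε_pos.le le_rfl fun i h1 h2 => by
      rcases (hcc_nonneg i h1 h2).eq_or_lt with h | h
      · left; rw [← h]; exact ⟨hε_pos, le_rfl⟩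
      · exact Or.inr ⟨hcc_min i h1 h2 h, h.le⟩
    refine isUniqueMin_of_slopes (τ := 0) (a := 0) (b := Sval lam β (c k) ε) hω le_rfl
      (fun z => ?_) hb (by simp) (by simpa using hγ) (by simpa using ht0)
    have := hb z
    have := mul_nonneg (hS ε) (abs_nonneg z)
    linarith
  -- Interior of a linear piece: `τ` solves the stationarity equation with slope `S(cc i + ε)`.
  have hpiece : ∀ i, 0 ≤ cc i →
      (∀ l, 1 ≤ l → l ≤ m - 1 → cc l ≤ cc i ∨ (cc i + ε < cc l ∧
        |gam X y β (c k)| ≤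
          sqnorm (xtil X β (c k)) * cc l + Sval lam β (c k) (cc i + ε))) →
      sqnorm (xtil X β (c k)) * cc i + Sval lam β (c k) (cc i + ε) ≤ |gam X y β (c k)| →
      t = sgn (gam X y β (c k)) / sqnorm (xtil X β (c k)) *
        (|gam X y β (c k)| - Sval lam β (c k) (cc i + ε)) →
      (∀ w : ℝ, Gfun lam X y β (c k) t ≤ Gfun lam X y β (c k) w) ∧
      (∀ z : ℝ, (∀ w : ℝ, Gfun lam X y β (c k) z ≤ Gfun lam X y β (c k) w) → z = t) := by
    intro i hi hl hγ ht
    set τ := (|gam X y β (c k)| - Sval lam β (c k) (cc i + ε)) / sqnorm (xtil X β (c k)) with hτ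
    have hωτ : sqnorm (xtil X β (c k)) * τ =
        |gam X y β (c k)| - Sval lam β (c k) (cc i + ε) := by
      rw [hτ]; field_simp
    have hiτ : cc i ≤ τ := by
      rw [hτ, le_div_iff₀ hω]; linarith
    have hb := hminor (cc i + ε) τ (by linarith) (hi.trans hiτ) fun l h1 h2 => by
      rcases hl l h1 h2 with h | ⟨h, h'⟩
      · left; constructor <;> linarith
      · refine Or.inr ⟨h, ?_⟩
        rw [hτ, div_le_iff₀ hω]; linarith
    refine isUniqueMin_of_slopes hω (hS (cc i + ε)) hb hb (by linarith) (by linarith) ?_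
    rw [ht, hτ]; ring
  have htop : sqnorm (xtil X β (c k)) * cc 1 + Sval lam β (c k) (cc 1 + ε) ≤
        |gam X y β (c k)| →
      t = sgn (gam X y β (c k)) / sqnorm (xtil X β (c k)) *
        (|gam X y β (c k)| - Sval lam β (c k) (cc 1 + ε)) →
      (∀ w : ℝ, Gfun lam X y β (c k) t ≤ Gfun lam X y β (c k) w) ∧
      (∀ z : ℝ, (∀ w : ℝ, Gfun lam X y β (c k) z ≤ Gfun lam X y β (c k) w) → z = t) := by
    refine hpiece 1 ?_ fun l h1 h2 => Or.inl ?_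
    · rcases (show m = 1 ∨ 1 ≤ m - 1 by omega) with h | h
      · rw [← h, h_cc_m]
      · exact hcc_nonneg 1 le_rfl h
    · rcases h1.eq_or_lt with h | h
      · rw [← h]
      · exact (h_cc_anti 1 l le_rfl h h2).le
  rcases ht with ⟨hγ, ht⟩ | ⟨i, h1, h2, hγ1, hγ2, ht⟩ | ⟨i, h1, h2, hγ1, hγ2, ht⟩ |
    ⟨hγ, ht⟩ | ⟨-, hγ, ht⟩
  · exact hzero hγ ht
  · rcases (hcc_nonneg i h1 h2).eq_or_lt with h0 | h0
    · rw [← h0] at hγ2 ht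
      exact hzero (by simpa using hγ2) (by simpa using ht)
    · have hmin := hcc_min i h1 h2 h0
      refine isUniqueMin_of_slopes hω (hS (cc i - ε))
        (hminor (cc i - ε) (cc i) (by linarith) h0.le fun l h3 h4 => ?_)
        (hminor (cc i + ε) (cc i) (by linarith) h0.le fun l h3 h4 => ?_) hγ1 hγ2 ht
      · rcases lt_trichotomy l i with h | h | h
        · have := hgap l i h3 h h2
          right; constructor <;> linarith
        · subst h
          right; constructor <;> linarith
        · have := hgap i l h1 h h4
          left; constructor <;> linarith
      · rcases lt_trichotomy l i with h | h | h
        · have := hgap l i h3 h h2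
          right; constructor <;> linarith
        · subst h
          left; constructor <;> linarith
        · have := hgap i l h1 h h4
          left; constructor <;> linarith
  · have hi' : 0 ≤ cc i := by
      rcases h2.eq_or_lt with h | h
      · rw [h, h_cc_m]
      · exact hcc_nonneg i (by omega) (by omega)
    have hprev_nonneg := hcc_nonneg (i - 1) (by omega) (by omega)
    have hprev : cc i + ε < cc (i - 1) := by
      rcases h2.eq_or_lt with h | h
      · subst h
        rw [h_cc_m] at hγ1 ⊢
        rcases hprev_nonneg.eq_or_lt with h0 | h0
        · exfalso
          have hneg : Sval lam β (c k) (0 - ε) = Sval lam β (c k) (0 + ε) :=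
            Sval_congr_abs lam β (c k) (by simp)
          rw [← h0, hneg] at hγ2
          linarith
        · simpa using hcc_min (i - 1) (by omega) (by omega) h0
      · exact hgap (i - 1) i (by omega) (by omega) (by omega)
    have hbelow : ∀ l, 1 ≤ l → l ≤ m - 1 → i ≤ l → cc l ≤ cc i := fun l h3 h4 h5 => by
      rcases h5.eq_or_lt with h | h
      · rw [h]
      · exact (h_cc_anti i l (by omega) h h4).le
    have habove : ∀ l, 1 ≤ l → l ≤ m - 1 → l < i → cc (i - 1) ≤ cc l := fun l h3 h4 h5 => by
      rcases (show l = i - 1 ∨ l < i - 1 by omega) with h | h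
      · rw [h]
      · exact (h_cc_anti l (i - 1) h3 h (by omega)).le
    have hSeq : Sval lam β (c k) (cc (i - 1) - ε) = Sval lam β (c k) (cc i + ε) := by
      refine Sval_eq_of_same_side hlam β (c k) (by linarith) (by linarith) fun j hj => ?_
      obtain ⟨l, h3, h4, h5⟩ := hother j hj
      rw [h5]
      rcases lt_or_ge l i with h | h
      · have := habove l h3 h4 h
        right; constructor <;> linarith
      · have := hbelow l h3 h4 h
        left; constructor <;> linarith
    refine hpiece i hi' (fun l h3 h4 => ?_) hγ1.le ht
    rcases lt_or_ge l i with h | h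
    · have hle := habove l h3 h4 h
      refine Or.inr ⟨by linarith, ?_⟩
      rw [hSeq] at hγ2
      have := mul_le_mul_of_nonneg_left hle hω.le
      linarith
    · exact Or.inl (hbelow l h3 h4 h)
  · exact htop hγ.le ht
  · exact htop hγ ht
end

section
/- Let λ ∈ ℝ^p be nonincreasing with λ_p > 0, let X ∈ ℝ^{n×p} be nonzero with L = ‖X‖₂² (squared spectral operator norm), and let y ∈ ℝ^n. Fix an integer v ≥ 1, and let (β^{(t)})_{t≥0} be a sequence in ℝ^p such that (i) P(β^{(t+1)}) ≤ P(β^{(t)}) for every t ≥ 0, and (ii) for every t with t ≡ 0 (mod v), β^{(t+1)} is the unique minimizer over u ∈ ℝ^p of (1/2)‖u − (β^{(t)} − (1/L)Xᵀ(Xβ^{(t)} − y))‖² + J(u)/L (the proximal gradient step with step size 1/L). Then lim_{t→∞} (P(β^{(t)}) − P(β*)) = 0, where β* is any global minimizer of P. -/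
open Finset Filter

noncomputable section

/-- The SLOPE objective `P(β) = (1/2)‖y − Xβ‖² + J(β)`. -/
def Pobj {n p : ℕ} (lam : Fin p → ℝ)
    (X : EuclideanSpace ℝ (Fin p) →L[ℝ] EuclideanSpace ℝ (Fin n))
    (y : EuclideanSpace ℝ (Fin n)) (b : EuclideanSpace ℝ (Fin p)) : ℝ :=
  (1 / 2) * ‖y - X b‖ ^ 2 + sortedL1 lam (fun j => b j)

/-- The proximal-gradient-step objective
`u ↦ (1/2)‖u − (β − (1/L)Xᵀ(Xβ − y))‖² + J(u)/L` with `L = ‖X‖₂²`. -/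
def proxObj {n p : ℕ} (lam : Fin p → ℝ)
    (X : EuclideanSpace ℝ (Fin p) →L[ℝ] EuclideanSpace ℝ (Fin n))
    (y : EuclideanSpace ℝ (Fin n)) (b u : EuclideanSpace ℝ (Fin p)) : ℝ :=
  (1 / 2) * ‖u - (b - (‖X‖ ^ 2)⁻¹ • (ContinuousLinearMap.adjoint X) (X b - y))‖ ^ 2 +
    sortedL1 lam (fun j => u j) / ‖X‖ ^ 2

end

lemma abs_comp_sortPerm_antitone {p : ℕ} (β : Fin p → ℝ) :
    Antitone fun j => |β (sortPerm β j)| := by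
  intro i j hij
  have h := Tuple.monotone_sort (fun j => |β j|)
  exact h (Fin.rev_le_rev.mpr hij)

lemma sum_mul_abs_perm_le_sortedL1 {p : ℕ} {lam : Fin p → ℝ} (hlam : Antitone lam)
    (β : Fin p → ℝ) (σ : Equiv.Perm (Fin p)) :
    ∑ j, lam j * |β (σ j)| ≤ sortedL1 lam β := by
  have h := (hlam.monovary (abs_comp_sortPerm_antitone β)).sum_mul_comp_perm_le_sum_mul
    (σ := σ.trans (sortPerm β).symm)
  simpa [sortedL1] using h

lemma sortedL1_convex_comb_le {p : ℕ} {lam : Fin p → ℝ} (hlam : Antitone lam)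
    (hpos : ∀ j, 0 ≤ lam j) (a b : Fin p → ℝ) {s : ℝ} (hs0 : 0 ≤ s) (hs1 : s ≤ 1) :
    sortedL1 lam (fun j => (1 - s) * a j + s * b j) ≤
      (1 - s) * sortedL1 lam a + s * sortedL1 lam b := by
  set σ := sortPerm (fun j => (1 - s) * a j + s * b j) with hσ
  have ha := mul_le_mul_of_nonneg_left (sum_mul_abs_perm_le_sortedL1 hlam a σ) (sub_nonneg.2 hs1)
  have hb := mul_le_mul_of_nonneg_left (sum_mul_abs_perm_le_sortedL1 hlam b σ) hs0
  refine le_trans ?_ (add_le_add ha hb)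
  rw [sortedL1, ← hσ, Finset.mul_sum, Finset.mul_sum, ← Finset.sum_add_distrib]
  refine Finset.sum_le_sum fun j _ => ?_
  have h := abs_add_le ((1 - s) * a (σ j)) (s * b (σ j))
  rw [abs_mul, abs_mul, abs_of_nonneg (sub_nonneg.2 hs1), abs_of_nonneg hs0] at h
  calc lam j * |(1 - s) * a (σ j) + s * b (σ j)|
      ≤ lam j * ((1 - s) * |a (σ j)| + s * |b (σ j)|) := mul_le_mul_of_nonneg_left h (hpos j)
    _ = _ := by ring

lemma mul_norm_le_sortedL1 {p : ℕ} {lam : Fin p → ℝ} {c : ℝ} (hc : 0 ≤ c)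
    (hlam : ∀ j, c ≤ lam j) (b : EuclideanSpace ℝ (Fin p)) :
    c * ‖b‖ ≤ sortedL1 lam (fun j => b j) := by
  have hsum : ∑ j, c * |b j| ≤ sortedL1 lam (fun j => b j) := by
    rw [← Equiv.sum_comp (sortPerm fun j => b j) fun j => c * |b j|]
    exact Finset.sum_le_sum fun j _ => mul_le_mul_of_nonneg_right (hlam j) (abs_nonneg _)
  refine le_trans ?_ hsum
  rw [← Finset.mul_sum]
  refine mul_le_mul_of_nonneg_left ?_ hc
  rw [EuclideanSpace.norm_eq]
  refine Real.sqrt_le_iff.2 ⟨Finset.sum_nonneg fun j _ => abs_nonneg _, ?_⟩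
  exact Finset.sum_sq_le_sq_sum_of_nonneg fun j _ => abs_nonneg (b j)

/-- Expansion of the least-squares term around `b`. -/
lemma half_norm_sub_sq_expand {n p : ℕ}
    (X : EuclideanSpace ℝ (Fin p) →L[ℝ] EuclideanSpace ℝ (Fin n))
    (y : EuclideanSpace ℝ (Fin n)) (b u : EuclideanSpace ℝ (Fin p)) :
    (1 / 2) * ‖y - X u‖ ^ 2 = (1 / 2) * ‖y - X b‖ ^ 2 +
      inner ℝ (u - b) (ContinuousLinearMap.adjoint X (X b - y)) + (1 / 2) * ‖X (u - b)‖ ^ 2 := by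
  rw [ContinuousLinearMap.adjoint_inner_right]
  have h : y - X u = -((X b - y) + X (u - b)) := by rw [map_sub]; abel
  rw [h, norm_neg, norm_add_sq_real, norm_sub_rev y, real_inner_comm]
  ring

/-- The proximal objective is, up to scaling and a constant, the quadratic model of `Pobj`. -/
lemma sq_norm_mul_proxObj {n p : ℕ} (lam : Fin p → ℝ)
    (X : EuclideanSpace ℝ (Fin p) →L[ℝ] EuclideanSpace ℝ (Fin n)) (hX : X ≠ 0)
    (y : EuclideanSpace ℝ (Fin n)) (b u : EuclideanSpace ℝ (Fin p)) :
    ‖X‖ ^ 2 * proxObj lam X y b u = ‖X‖ ^ 2 / 2 * ‖u - b‖ ^ 2 +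
      inner ℝ (u - b) (ContinuousLinearMap.adjoint X (X b - y)) +
      sortedL1 lam (fun j => u j) +
      (‖X‖ ^ 2)⁻¹ / 2 * ‖ContinuousLinearMap.adjoint X (X b - y)‖ ^ 2 := by
  have hL : ‖X‖ ≠ 0 := norm_ne_zero_iff.2 hX
  set g := ContinuousLinearMap.adjoint X (X b - y) with hg
  have h : u - (b - (‖X‖ ^ 2)⁻¹ • g) = (u - b) + (‖X‖ ^ 2)⁻¹ • g := by abel
  rw [proxObj, ← hg, h, norm_add_sq_real, inner_smul_right, norm_smul, Real.norm_eq_abs, mul_pow,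
    sq_abs]
  field_simp
  ring

/-- One proximal gradient step makes progress towards any point `c`. -/
lemma Pobj_prox_step_le {n p : ℕ} {lam : Fin p → ℝ} (hlam : Antitone lam)
    (hpos : ∀ j, 0 ≤ lam j)
    (X : EuclideanSpace ℝ (Fin p) →L[ℝ] EuclideanSpace ℝ (Fin n)) (hX : X ≠ 0)
    (y : EuclideanSpace ℝ (Fin n)) {b b' : EuclideanSpace ℝ (Fin p)}
    (hmin : ∀ u, proxObj lam X y b b' ≤ proxObj lam X y b u) (c : EuclideanSpace ℝ (Fin p))
    {s : ℝ} (hs0 : 0 ≤ s) (hs1 : s ≤ 1) :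
    Pobj lam X y b' ≤ (1 - s) * Pobj lam X y b + s * Pobj lam X y c +
      s ^ 2 * (‖X‖ ^ 2 / 2 * ‖c - b‖ ^ 2) := by
  have hm := mul_le_mul_of_nonneg_left (hmin (b + s • (c - b))) (sq_nonneg ‖X‖)
  rw [sq_norm_mul_proxObj lam X hX, sq_norm_mul_proxObj lam X hX, add_sub_cancel_left,
    inner_smul_left, norm_smul, Real.norm_eq_abs, mul_pow, sq_abs] at hm
  have hJ := sortedL1_convex_comb_le hlam hpos (fun j => b j) (fun j => c j) hs0 hs1
  have hcomb : (fun j => (b + s • (c - b)) j) = fun j => (1 - s) * b j + s * c j := by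
    funext j
    simp only [PiLp.add_apply, PiLp.smul_apply, PiLp.sub_apply, smul_eq_mul]
    ring
  rw [hcomb] at hm
  have hb' := half_norm_sub_sq_expand X y b b'
  have hc := half_norm_sub_sq_expand X y b c
  have hop : ‖X (b' - b)‖ ^ 2 ≤ ‖X‖ ^ 2 * ‖b' - b‖ ^ 2 := by
    rw [← mul_pow]
    exact pow_le_pow_left₀ (norm_nonneg _) (X.le_opNorm _) 2
  have hnn : 0 ≤ s * ((1 / 2) * ‖X (c - b)‖ ^ 2) := by positivity
  simp only [conj_trivial] at hm
  simp only [Pobj]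
  rw [hb', hc]
  linarith

/-- convergence of the hybrid algorithm: if `λ` is nonincreasing with
`λ_p > 0`, `X ≠ 0`, the sequence `β^{(t)}` is nonincreasing in objective value, and at every
iteration `t ≡ 0 (mod v)` the next iterate is the unique minimizer of the proximal gradient
objective with step size `1/L`, `L = ‖X‖₂²`, then `P(β^{(t)}) − P(β*) → 0` for any global
minimizer `β*` of `P`. -/
theorem hybrid_algorithm_convergence
    {n p : ℕ} (hn : 0 < n) (hp : 0 < p)
    (lam : Fin p → ℝ)
    (hlam_mono : ∀ i j : Fin p, i ≤ j → lam j ≤ lam i)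
    (hlam_last : 0 < lam ⟨p - 1, by omega⟩)
    (X : EuclideanSpace ℝ (Fin p) →L[ℝ] EuclideanSpace ℝ (Fin n)) (hX : X ≠ 0)
    (y : EuclideanSpace ℝ (Fin n))
    (v : ℕ) (hv : 1 ≤ v)
    (bseq : ℕ → EuclideanSpace ℝ (Fin p))
    (h_descent : ∀ t : ℕ, Pobj lam X y (bseq (t + 1)) ≤ Pobj lam X y (bseq t))
    (h_prox : ∀ t : ℕ, t % v = 0 →
      (∀ u, proxObj lam X y (bseq t) (bseq (t + 1)) ≤ proxObj lam X y (bseq t) u) ∧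
      (∀ u, (∀ u', proxObj lam X y (bseq t) u ≤ proxObj lam X y (bseq t) u') →
        u = bseq (t + 1)))
    (bstar : EuclideanSpace ℝ (Fin p))
    (h_star : ∀ u, Pobj lam X y bstar ≤ Pobj lam X y u) :
    Filter.Tendsto (fun t : ℕ => Pobj lam X y (bseq t) - Pobj lam X y bstar)
      Filter.atTop (nhds 0) := by
  have hlam : Antitone lam := fun i j hij => hlam_mono i j hij
  have hge : ∀ j, lam ⟨p - 1, by omega⟩ ≤ lam j := fun j =>
    hlam_mono _ _ (Fin.mk_le_mk.2 (by omega) : j ≤ ⟨p - 1, by omega⟩)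
  set m := lam ⟨p - 1, by omega⟩
  have hpos : ∀ j, 0 ≤ lam j := fun j => hlam_last.le.trans (hge j)
  have hanti : Antitone fun t => Pobj lam X y (bseq t) - Pobj lam X y bstar :=
    antitone_nat_of_succ_le fun t => sub_le_sub_right (h_descent t) _
  have hnonneg : ∀ t, 0 ≤ Pobj lam X y (bseq t) - Pobj lam X y bstar := fun t =>
    sub_nonneg.2 (h_star _)
  obtain ⟨d, hd⟩ : ∃ d, Tendsto (fun t => Pobj lam X y (bseq t) - Pobj lam X y bstar)
      atTop (nhds d) :=
    ⟨_, tendsto_atTop_ciInf hanti ⟨0, by rintro _ ⟨t, rfl⟩; exact hnonneg t⟩⟩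
  have hd0 : 0 ≤ d := ge_of_tendsto' hd hnonneg
  have hnorm : ∀ t, ‖bseq t‖ ≤ Pobj lam X y (bseq 0) / m := fun t => by
    rw [le_div_iff₀' hlam_last]
    refine (mul_norm_le_sortedL1 hlam_last.le hge _).trans (le_trans ?_
      (sub_le_sub_iff_right _ |>.1 (hanti (Nat.zero_le t))))
    exact le_add_of_nonneg_left (by positivity)
  set C := ‖X‖ ^ 2 / 2 * (‖bstar‖ + Pobj lam X y (bseq 0) / m) ^ 2 with hC
  have hdist : ∀ t, ‖X‖ ^ 2 / 2 * ‖bstar - bseq t‖ ^ 2 ≤ C := fun t => by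
    have := (norm_sub_le bstar (bseq t)).trans (add_le_add_right (hnorm t) ‖bstar‖)
    rw [hC]
    gcongr
  have hmul : Tendsto (fun k : ℕ => v * k) atTop atTop :=
    tendsto_id.const_mul_atTop' (by omega)
  have hlimit : ∀ s : ℝ, 0 ≤ s → s ≤ 1 → d ≤ (1 - s) * d + s ^ 2 * C := fun s hs0 hs1 => by
    refine le_of_tendsto_of_tendsto' (hd.comp ((tendsto_add_atTop_nat 1).comp hmul))
      (((hd.comp hmul).const_mul (1 - s)).add_const (s ^ 2 * C)) fun k => ?_
    have h := Pobj_prox_step_le hlam hpos X hX y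
      (h_prox (v * k) (Nat.mul_mod_right v k)).1 bstar hs0 hs1
    have h' := mul_le_mul_of_nonneg_left (hdist (v * k)) (sq_nonneg s)
    simp only [Function.comp_apply]
    linarith
  have hC0 : 0 ≤ C := by positivity
  have hdz : d = 0 := by
    refine le_antisymm (le_of_forall_pos_le_add fun ε hε => ?_) hd0
    set s := min 1 (ε / (C + 1))
    have hspos : 0 < s := lt_min one_pos (by positivity)
    have h := hlimit s hspos.le (min_le_left _ _)
    have hdC : d ≤ s * C := le_of_mul_le_mul_left (by linarith) hspos
    have hsε : s * (C + 1) ≤ ε := (le_div_iff₀ (by positivity)).1 (min_le_right _ _)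
    linarith
  rwa [hdz] at hd
end

section
/- Let β* be a global minimizer of P over ℝ^p, with clusters C*_1, …, C*_{m*} (C*_i = {j : |β*_j| = c*_i} for the distinct values c*_1 > … > c*_{m*} ≥ 0 of |β*|). Let σ be a permutation sorting |β*| nonincreasingly and set w_i = Σ_{j∈C*_i} λ_{σ⁻¹(j)}. Then the vector z* = (c*_1, …, c*_{m*}) minimizes over z ∈ ℝ^{m*} the separable objective (1/2)‖y − X Σ_{i=1}^{m*} Σ_{j∈C*_i} z_i sign(β*_j) e_j‖² + Σ_{i=1}^{m*} |z_i| · w_i, where (e_j) is the canonical basis of ℝ^p. -/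
open Finset Filter

/-- The sorted ℓ₁ norm can be computed with any permutation sorting the absolute values. -/
theorem sortedL1_eq_of_antitone {p : ℕ} (lam u : Fin p → ℝ) (σ : Equiv.Perm (Fin p))
    (hσ : Antitone fun j => |u (σ j)|) :
    sortedL1 lam u = ∑ j, lam j * |u (σ j)| := by
  have hrev : Monotone ((fun j => |u j|) ∘ (Fin.revPerm.trans σ : Equiv.Perm (Fin p))) :=
    fun i j hij => hσ (Fin.rev_le_rev.mpr hij)
  have heq := Tuple.comp_sort_eq_comp_iff_monotone.mpr hrev
  refine Finset.sum_congr rfl fun j _ => ?_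
  have := congrFun heq (Fin.rev j)
  simp only [Function.comp_apply, Equiv.trans_apply, Fin.revPerm_apply, Fin.rev_rev] at this
  simp only [sortPerm, Equiv.trans_apply, Fin.revPerm_apply, ← this]

theorem abs_sgn (t : ℝ) : |sgn t| = 1 := by
  unfold sgn; split_ifs <;> simp

theorem abs_mul_sgn (t : ℝ) : |t| * sgn t = t := by
  unfold sgn
  split_ifs with h
  · rw [abs_of_neg h]; ring
  · rw [abs_of_nonneg (not_lt.mp h)]; ring

/-- The squared norm is convex along segments. -/
theorem sqnorm_convex_comb_le {n : ℕ} (a b : Fin n → ℝ) {t : ℝ} (ht0 : 0 ≤ t) (ht1 : t ≤ 1) :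
    sqnorm (fun i => (1 - t) * a i + t * b i) ≤ (1 - t) * sqnorm a + t * sqnorm b := by
  simp only [sqnorm, Finset.mul_sum, ← Finset.sum_add_distrib]
  refine Finset.sum_le_sum fun i _ => ?_
  nlinarith [mul_nonneg (mul_nonneg ht0 (sub_nonneg.mpr ht1)) (sq_nonneg (a i - b i))]

/-- A strictly decreasing nonnegative finite family keeps strictly decreasing absolute values
under small perturbations along a segment. -/
theorem eventually_strictAnti_abs_segment {m : ℕ} (c z : Fin m → ℝ) (hc : StrictAnti c)
    (hc0 : ∀ i, 0 ≤ c i) :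
    ∀ᶠ t in nhds (0 : ℝ), StrictAnti fun i => |(1 - t) * c i + t * z i| := by
  simp only [StrictAnti, Filter.eventually_all]
  intro i j hij
  have hcont : ∀ k, Continuous fun t : ℝ => |(1 - t) * c k + t * z k| := fun k => by fun_prop
  refine (hcont j).continuousAt.eventually_lt (hcont i).continuousAt ?_
  simpa [abs_of_nonneg (hc0 _)] using hc hij

/-- Summing cluster weights over clusters amounts to summing over sorted coordinates. -/
theorem sum_cluster_weights {p m : ℕ} (lam b : Fin p → ℝ) (c : Fin m → ℝ)
    (hc : Function.Injective c) (ι : Fin p → Fin m) (hι : ∀ j, b j = c (ι j))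
    (σ : Equiv.Perm (Fin p)) (a : Fin m → ℝ) :
    ∑ i, a i * (∑ j, if b j = c i then lam (σ⁻¹ j) else 0) = ∑ j, lam j * a (ι (σ j)) := by
  simp only [hι, hc.eq_iff, Finset.mul_sum]
  rw [Finset.sum_comm, ← Equiv.sum_comp σ]
  simp [mul_comm]

/-- at a global minimizer `β*` of the SLOPE objective with clusters
`C*_i = {j : |β*_j| = c*_i}` (encoded by the cluster-index map `ι`), the vector
`z* = (c*_1, …, c*_{m*})` minimizes the separable objective of Problem (2). Here `σ` is a
permutation sorting `|β*|` nonincreasingly and `w_i = Σ_{j ∈ C*_i} λ_{σ⁻¹(j)}`. -/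
theorem separable_problem_at_optimum
    {n p m : ℕ} (hn : 0 < n) (hp : 0 < p) (hm : 0 < m)
    (lam : Fin p → ℝ)
    (hlam_mono : ∀ i j : Fin p, i ≤ j → lam j ≤ lam i)
    (hlam_nonneg : ∀ j, 0 ≤ lam j)
    (X : Matrix (Fin n) (Fin p) ℝ) (y : Fin n → ℝ)
    (βstar : Fin p → ℝ)
    (h_min : ∀ u : Fin p → ℝ,
      (1 / 2) * sqnorm (fun i => y i - ∑ j, X i j * βstar j) + sortedL1 lam βstar ≤
      (1 / 2) * sqnorm (fun i => y i - ∑ j, X i j * u j) + sortedL1 lam u)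
    (c : Fin m → ℝ) (hc_anti : StrictAnti c) (hc_nonneg : ∀ i, 0 ≤ c i)
    (ι : Fin p → Fin m) (hι : ∀ j, |βstar j| = c (ι j)) (hι_surj : Function.Surjective ι)
    (σ : Equiv.Perm (Fin p))
    (hσ : ∀ i j : Fin p, i ≤ j → |βstar (σ j)| ≤ |βstar (σ i)|) :
    ∀ z : Fin m → ℝ,
      (1 / 2) * sqnorm (fun i => y i - ∑ j, X i j * (c (ι j) * sgn (βstar j))) +
          ∑ i, |c i| * (∑ j, if |βstar j| = c i then lam (σ⁻¹ j) else 0)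
        ≤
      (1 / 2) * sqnorm (fun i => y i - ∑ j, X i j * (z (ι j) * sgn (βstar j))) +
          ∑ i, |z i| * (∑ j, if |βstar j| = c i then lam (σ⁻¹ j) else 0) := by
  intro z
  rw [sum_cluster_weights lam _ c hc_anti.injective ι hι σ fun i => |c i|,
    sum_cluster_weights lam _ c hc_anti.injective ι hι σ fun i => |z i|]
  obtain ⟨t, hanti, ht1, ht0⟩ : ∃ t : ℝ,
      (StrictAnti fun i => |(1 - t) * c i + t * z i|) ∧ t < 1 ∧ 0 < t := by
    have hsmall := (eventually_strictAnti_abs_segment c z hc_anti hc_nonneg).and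
      (eventually_lt_nhds (zero_lt_one' ℝ))
    obtain ⟨t, ⟨hs, h1⟩, h0⟩ :=
      ((hsmall.filter_mono nhdsWithin_le_nhds).and
        (self_mem_nhdsWithin : Set.Ioi (0 : ℝ) ∈ nhdsWithin 0 (Set.Ioi 0))).exists
    exact ⟨t, hs, h1, h0⟩
  have hβ : ∀ j, c (ι j) * sgn (βstar j) = βstar j := fun j => by
    rw [← hι, abs_mul_sgn]
  have hιmono : ∀ i j : Fin p, i ≤ j → ι (σ i) ≤ ι (σ j) := fun i j hij => by
    have := hσ i j hij
    rwa [hι, hι, hc_anti.le_iff_ge] at this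
  have hmin := h_min fun j => ((1 - t) * c (ι j) + t * z (ι j)) * sgn (βstar j)
  rw [sortedL1_eq_of_antitone lam βstar σ fun i j hij => hσ i j hij,
    sortedL1_eq_of_antitone lam _ σ fun i j hij => by
      simpa [abs_mul, abs_sgn] using hanti.antitone (hιmono i j hij)] at hmin
  simp only [abs_mul, abs_sgn, mul_one] at hmin
  have hpen : ∑ j, lam j * |(1 - t) * c (ι (σ j)) + t * z (ι (σ j))| ≤
      (1 - t) * ∑ j, lam j * |c (ι (σ j))| + t * ∑ j, lam j * |z (ι (σ j))| := by
    simp only [Finset.mul_sum, ← Finset.sum_add_distrib]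
    refine Finset.sum_le_sum fun j _ => ?_
    have habs := abs_add_le ((1 - t) * c (ι (σ j))) (t * z (ι (σ j)))
    rw [abs_mul, abs_mul, abs_of_pos ht0, abs_of_pos (sub_pos.mpr ht1)] at habs
    linarith [mul_le_mul_of_nonneg_left habs (hlam_nonneg j)]
  have hquad := sqnorm_convex_comb_le
    (fun i => y i - ∑ j, X i j * (c (ι j) * sgn (βstar j)))
    (fun i => y i - ∑ j, X i j * (z (ι j) * sgn (βstar j))) ht0.le ht1.le
  have hres : (fun i => (1 - t) * (y i - ∑ j, X i j * (c (ι j) * sgn (βstar j))) +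
        t * (y i - ∑ j, X i j * (z (ι j) * sgn (βstar j)))) =
      fun i => y i - ∑ j, X i j * (((1 - t) * c (ι j) + t * z (ι j)) * sgn (βstar j)) := by
    funext i
    have hsum : ∑ j, X i j * (((1 - t) * c (ι j) + t * z (ι j)) * sgn (βstar j)) =
        (1 - t) * ∑ j, X i j * (c (ι j) * sgn (βstar j)) +
          t * ∑ j, X i j * (z (ι j) * sgn (βstar j)) := by
      simp only [Finset.mul_sum, ← Finset.sum_add_distrib]
      exact Finset.sum_congr rfl fun j _ => by ring
    rw [hsum]; ring
  rw [hres] at hquad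
  have habsβ : ∀ j, |βstar (σ j)| = |c (ι (σ j))| := fun j => by
    rw [hι, abs_of_nonneg (hc_nonneg _)]
  simp only [habsβ] at hmin
  simp only [hβ] at hquad ⊢
  refine le_of_mul_le_mul_left ?_ ht0
  linarith
end
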